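/- For all positive integers k, ℓ and all real numbers x, y, one has 0.5(x − y)(1 + 0.25(x − y)^2)(q_{k,ℓ}(x) − q_{k,ℓ}(y)) − 0.00025(x − y)^2 p_{k,ℓ}(x) ≥ 0. -/

import Mathlib

open scoped BigOperators

/-- `taylorExp ℓ x = ∑_{k=0}^{ℓ} x^k/k!`, the degree-`ℓ` truncation of the Taylor
series of `e^x`. -/
noncomputable def taylorExp (ℓ : ℕ) (x : ℝ) : ℝ :=
  ∑ k ∈ Finset.range (ℓ + 1), x ^ k / (Nat.factorial k : ℝ)

/-- `pkl k ℓ x = ∏_{j=1}^{k} s_{2^j ℓ}(x/k)`. -/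
noncomputable def pkl (k ℓ : ℕ) (x : ℝ) : ℝ :=
  ∏ j ∈ Finset.Icc 1 k, taylorExp (2 ^ j * ℓ) (x / (k : ℝ))

/-- `qkl k ℓ x = 1 + ∫_0^x pkl k ℓ y dy`. -/
noncomputable def qkl (k ℓ : ℕ) (x : ℝ) : ℝ :=
  1 + ∫ y in (0:ℝ)..x, pkl k ℓ y

lemma taylorExp_succ (n : ℕ) (x : ℝ) :
    taylorExp (n + 1) x = taylorExp n x + x ^ (n + 1) / (Nat.factorial (n + 1) : ℝ) := by
  unfold taylorExp
  rw [Finset.sum_range_succ]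

lemma hasDerivAt_mono (m : ℕ) (x : ℝ) :
    HasDerivAt (fun x : ℝ => x ^ (m + 1) / (Nat.factorial (m + 1) : ℝ))
      (x ^ m / (Nat.factorial m : ℝ)) x := by
  have h := (hasDerivAt_pow (m + 1) x).div_const (Nat.factorial (m + 1) : ℝ)
  refine h.congr_deriv ?_
  have h1 : (Nat.factorial m : ℝ) ≠ 0 := by positivity
  rw [Nat.factorial_succ]
  push_cast
  have h2 : (m : ℝ) + 1 ≠ 0 := by positivity
  field_simp

lemma hasDerivAt_taylorExp_succ (n : ℕ) (x : ℝ) :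
    HasDerivAt (taylorExp (n + 1)) (taylorExp n x) x := by
  induction n with
  | zero =>
    have h : taylorExp (0 + 1) = fun x : ℝ => 1 + x := by
      funext z; simp [taylorExp, Finset.sum_range_succ]
    have h2 : taylorExp 0 x = 1 := by simp [taylorExp]
    rw [h, h2]
    exact (hasDerivAt_id x).const_add 1
  | succ n ih =>
    have h : taylorExp (n + 1 + 1) = fun x : ℝ => taylorExp (n + 1) x +
        x ^ (n + 1 + 1) / (Nat.factorial (n + 1 + 1) : ℝ) := by
      funext z; exact taylorExp_succ _ _
    rw [h, taylorExp_succ n x]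
    exact ih.add (hasDerivAt_mono (n + 1) x)

lemma hasDerivAt_taylorExp (m : ℕ) (x : ℝ) :
    HasDerivAt (taylorExp (m + 1))
      (taylorExp (m + 1) x - x ^ (m + 1) / (Nat.factorial (m + 1) : ℝ)) x := by
  have h := hasDerivAt_taylorExp_succ m x
  rw [taylorExp_succ]
  simpa using h

lemma hasDerivAt_expmul (c x : ℝ) :
    HasDerivAt (fun x : ℝ => Real.exp (c * x)) (Real.exp (c * x) * c) x := by
  have h := ((hasDerivAt_id x).const_mul c).exp
  simpa using h

/-- `s_n e^{-x}` is antitone for even `n`. -/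
lemma taylor_antitone (m : ℕ) (hm : Odd m) :
    Antitone (fun x : ℝ => Real.exp (-1 * x) * taylorExp (m + 1) x) := by
  have hd := fun x : ℝ => (hasDerivAt_expmul (-1) x).mul (hasDerivAt_taylorExp m x)
  refine antitone_of_hasDerivAt_nonpos hd ?_
  intro x
  have h1 : 0 ≤ x ^ (m + 1) / (Nat.factorial (m + 1) : ℝ) :=
    div_nonneg (hm.add_one.pow_nonneg x) (by positivity)
  have h2 := (Real.exp_pos (-1 * x)).le
  simp only [Pi.zero_apply]
  nlinarith [mul_nonneg h2 h1]

lemma taylorExp_zero_arg (n : ℕ) : taylorExp n 0 = 1 := by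
  unfold taylorExp
  rw [Finset.sum_range_succ']
  simp

lemma taylor_ge_exp (m : ℕ) (hm : Odd m) (x : ℝ) (hx : x ≤ 0) :
    Real.exp x ≤ taylorExp (m + 1) x := by
  have h := taylor_antitone m hm hx
  simp only [taylorExp_zero_arg, mul_zero, Real.exp_zero, mul_one] at h
  have h3 : Real.exp x * Real.exp (-1 * x) = 1 := by
    rw [← Real.exp_add]; simp
  have h4 := mul_le_mul_of_nonneg_left h (Real.exp_pos x).le
  rwa [← mul_assoc, h3, one_mul, mul_one] at h4

lemma term_le (m : ℕ) (hm : Odd m) (x : ℝ) :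
    0 < taylorExp (m + 1) x ∧
    x ^ (m + 1) / (Nat.factorial (m + 1) : ℝ) ≤ 11 * taylorExp (m + 1) x := by
  rcases le_total 0 x with hx | hx
  · have h0 : 1 ≤ taylorExp m x := by
      unfold taylorExp
      rw [Finset.sum_range_succ']
      have : 0 ≤ ∑ k ∈ Finset.range m, x ^ (k + 1) / (Nat.factorial (k + 1) : ℝ) :=
        Finset.sum_nonneg fun i _ => by positivity
      simp; exact this
    have h1 : 0 ≤ x ^ (m + 1) / (Nat.factorial (m + 1) : ℝ) := by positivity
    rw [taylorExp_succ]
    constructor <;> linarith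
  have hpos : ∀ z : ℝ, z ≤ 0 → 0 < taylorExp (m + 1) z := fun z hz =>
    (Real.exp_pos z).trans_le (taylor_ge_exp m hm z hz)
  refine ⟨hpos x hx, ?_⟩
  set a : ℝ := -((m : ℝ) + 1) / 10 with ha
  have ha0 : a ≤ 0 := by
    rw [ha]; have : (0:ℝ) ≤ m := by positivity
    linarith
  have small : ∀ z : ℝ, a ≤ z → z ≤ 0 →
      z ^ (m + 1) / (Nat.factorial (m + 1) : ℝ) ≤ 11 * taylorExp (m + 1) z := by
    intro z hz hz0
    have h1 := Real.pow_div_factorial_le_exp (10 * (-z)) (by linarith) (m + 1)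
    rw [mul_pow, hm.add_one.neg_pow] at h1
    have h2 := taylor_ge_exp m hm z hz0
    have h3 := hpos z hz0
    have h4 : Real.exp (10 * (-z)) ≤ 10 ^ (m + 1) * Real.exp z := by
      have e1 : Real.exp 2 ≤ 10 := by
        have := Real.exp_one_lt_d9
        have e : Real.exp 2 = Real.exp 1 * Real.exp 1 := by rw [← Real.exp_add]; norm_num
        rw [e]; nlinarith [Real.exp_pos 1]
      have e2 : Real.exp (2 * ((m : ℝ) + 1)) ≤ 10 ^ (m + 1) := by
        have : Real.exp (2 * ((m : ℝ) + 1)) = (Real.exp 2) ^ (m + 1) := by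
          rw [← Real.exp_nat_mul]; push_cast; ring_nf
        rw [this]
        exact pow_le_pow_left₀ (Real.exp_pos 2).le e1 _
      calc Real.exp (10 * (-z)) ≤ Real.exp (2 * ((m : ℝ) + 1) + z) := by
            apply Real.exp_le_exp.2
            rw [ha] at hz
            linarith
        _ = Real.exp (2 * ((m : ℝ) + 1)) * Real.exp z := Real.exp_add _ _
        _ ≤ _ := mul_le_mul_of_nonneg_right e2 (Real.exp_pos z).le
    have h5 : z ^ (m + 1) / (Nat.factorial (m + 1) : ℝ) ≤ Real.exp z := by
      have h10 : (0:ℝ) < 10 ^ (m + 1) := by positivity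
      rw [mul_div_assoc] at h1
      exact le_of_mul_le_mul_left (h1.trans h4) h10
    linarith
  rcases le_total a x with hax | hax
  · exact small x hax hx
  have hd := fun x : ℝ => (hasDerivAt_expmul (-1) x).mul
    (((hasDerivAt_taylorExp m x).const_mul 11).sub (hasDerivAt_mono m x))
  have hanti := antitoneOn_of_hasDerivWithinAt_nonpos (convex_Iic a)
    (fun x _ => (hd x).continuousAt.continuousWithinAt)
    (fun x _ => (hd x).hasDerivWithinAt) (by
      intro z hz
      rw [interior_Iic] at hz
      have hz : z < a := hz
      have hz0 : z ≤ 0 := by linarith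
      have h1 : z ^ m ≤ 0 := hm.pow_nonpos hz0
      have h2 : 10 * z + (m + 1) ≤ 0 := by rw [ha] at hz; linarith
      have h3 : z ^ m / (Nat.factorial m : ℝ) =
        z ^ m * (m + 1) / (Nat.factorial (m + 1) : ℝ) := by
        rw [Nat.factorial_succ]; push_cast; field_simp
      have key : 0 ≤ Real.exp (-1 * z) *
          (z ^ m * (10 * z + (m + 1)) / (Nat.factorial (m + 1) : ℝ)) :=
        mul_nonneg (Real.exp_pos _).le
          (div_nonneg (mul_nonneg_of_nonpos_of_nonpos h1 h2) (by positivity))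
      simp only [Pi.sub_apply]
      rw [h3]
      refine le_of_eq_of_le ?_ (neg_nonpos.2 key)
      rw [pow_succ]
      ring)
  have h := hanti (Set.mem_Iic.2 hax) (Set.mem_Iic.2 le_rfl) hax
  simp only [Pi.mul_apply, Pi.sub_apply] at h
  have h1 := small a le_rfl ha0
  have h2 : 0 ≤ Real.exp (-1 * x) *
      (11 * taylorExp (m + 1) x - x ^ (m + 1) / (Nat.factorial (m + 1) : ℝ)) :=
    le_trans (mul_nonneg (Real.exp_pos _).le (by linarith)) h
  have h3 := nonneg_of_mul_nonneg_right h2 (Real.exp_pos _)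
  linarith

lemma taylor_monotone (m : ℕ) (hm : Odd m) :
    Monotone (fun x : ℝ => Real.exp (10 * x) * taylorExp (m + 1) x) := by
  have hd := fun x : ℝ => (hasDerivAt_expmul 10 x).mul (hasDerivAt_taylorExp m x)
  refine monotone_of_hasDerivAt_nonneg hd ?_
  intro x
  have h1 := (term_le m hm x).2
  have h2 := (Real.exp_pos (10 * x)).le
  simp only [Pi.zero_apply]
  nlinarith [mul_nonneg h2 (sub_nonneg.2 h1)]

lemma taylor_lower (m : ℕ) (hm : Odd m) (x y : ℝ) :
    Real.exp (-(10 * |x - y|)) * taylorExp (m + 1) x ≤ taylorExp (m + 1) y := by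
  have hp := (term_le m hm x).1
  rcases le_total x y with h | h
  · have h1 := taylor_monotone m hm h
    simp only at h1
    rw [abs_of_nonpos (by linarith)]
    have e : Real.exp (-(10 * -(x - y))) = Real.exp (-(10 * y)) * Real.exp (10 * x) := by
      rw [← Real.exp_add]; ring_nf
    have e2 : Real.exp (-(10 * y)) * Real.exp (10 * y) = 1 := by
      rw [← Real.exp_add]; simp
    have := mul_le_mul_of_nonneg_left h1 (Real.exp_pos (-(10 * y))).le
    rw [← mul_assoc, ← mul_assoc, e2, ← e, one_mul] at this
    exact this
  · have h1 := taylor_antitone m hm h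
    simp only at h1
    rw [abs_of_nonneg (by linarith)]
    have e : Real.exp (-(x - y)) = Real.exp y * Real.exp (-1 * x) := by
      rw [← Real.exp_add]; ring_nf
    have e2 : Real.exp y * Real.exp (-1 * y) = 1 := by
      rw [← Real.exp_add]; simp
    have := mul_le_mul_of_nonneg_left h1 (Real.exp_pos y).le
    rw [← mul_assoc, ← mul_assoc, e2, ← e, one_mul] at this
    refine le_trans (mul_le_mul_of_nonneg_right (Real.exp_le_exp.2 ?_) hp.le) this
    linarith

lemma exists_odd (j ℓ : ℕ) (hj : 1 ≤ j) (hℓ : 0 < ℓ) :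
    ∃ m, Odd m ∧ 2 ^ j * ℓ = m + 1 := by
  obtain ⟨i, rfl⟩ : ∃ i, j = i + 1 := ⟨j - 1, by omega⟩
  have h : 0 < 2 ^ i * ℓ := by positivity
  refine ⟨2 * (2 ^ i * ℓ - 1) + 1, ⟨_, rfl⟩, ?_⟩
  rw [pow_succ, mul_right_comm]
  omega

lemma pkl_pos (k ℓ : ℕ) (hℓ : 0 < ℓ) (x : ℝ) : 0 < pkl k ℓ x := by
  unfold pkl
  refine Finset.prod_pos fun j hj => ?_
  obtain ⟨m, hm, e⟩ := exists_odd j ℓ (Finset.mem_Icc.1 hj).1 hℓ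
  rw [e]
  exact (term_le m hm _).1

lemma pkl_lower (k ℓ : ℕ) (hk : 0 < k) (hℓ : 0 < ℓ) (x y : ℝ) :
    Real.exp (-(10 * |x - y|)) * pkl k ℓ x ≤ pkl k ℓ y := by
  have hk' : (0:ℝ) < k := by exact_mod_cast hk
  have e : Real.exp (-(10 * |x - y|)) =
      ∏ j ∈ Finset.Icc 1 k, Real.exp (-(10 * |x / k - y / k|)) := by
    rw [Finset.prod_const, Nat.card_Icc, ← Real.exp_nat_mul, ← sub_div, abs_div,
      abs_of_pos hk']
    congr 1
    simp
    field_simp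
  rw [e]
  unfold pkl
  rw [← Finset.prod_mul_distrib]
  refine Finset.prod_le_prod (fun j hj => ?_) (fun j hj => ?_)
  · obtain ⟨m, hm, e⟩ := exists_odd j ℓ (Finset.mem_Icc.1 hj).1 hℓ
    rw [e]
    exact mul_nonneg (Real.exp_pos _).le (term_le m hm _).1.le
  · obtain ⟨m, hm, e⟩ := exists_odd j ℓ (Finset.mem_Icc.1 hj).1 hℓ
    rw [e]
    exact taylor_lower m hm _ _

lemma continuous_pkl (k ℓ : ℕ) : Continuous (pkl k ℓ) := by
  unfold pkl taylorExp
  fun_prop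

lemma qkl_sub (k ℓ : ℕ) (a b : ℝ) :
    qkl k ℓ b - qkl k ℓ a = ∫ u in a..b, pkl k ℓ u := by
  have hi := fun a b : ℝ => (continuous_pkl k ℓ).intervalIntegrable
    (μ := MeasureTheory.volume) a b
  unfold qkl
  rw [← intervalIntegral.integral_interval_sub_left (hi 0 b) (hi 0 a)]
  ring

lemma qkl_mono (k ℓ : ℕ) (hℓ : 0 < ℓ) {a b : ℝ} (h : a ≤ b) : qkl k ℓ a ≤ qkl k ℓ b := by
  have := intervalIntegral.integral_nonneg h (μ := MeasureTheory.volume)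
    (fun u _ => (pkl_pos k ℓ hℓ u).le)
  rw [← qkl_sub] at this
  linarith

/-- short interval bound -/
lemma qkl_short (k ℓ : ℕ) (hk : 0 < k) (hℓ : 0 < ℓ) (x : ℝ) {a b : ℝ} (h : a ≤ b)
    (ha : x - 1 / 10 ≤ a) (hb : b ≤ x + 1 / 10) :
    (b - a) * (pkl k ℓ x / 3) ≤ qkl k ℓ b - qkl k ℓ a := by
  rw [qkl_sub]
  have h1 : ∫ _u in a..b, pkl k ℓ x / 3 = (b - a) * (pkl k ℓ x / 3) := by
    rw [intervalIntegral.integral_const, smul_eq_mul]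
  rw [← h1]
  refine intervalIntegral.integral_mono_on h (by simp)
    ((continuous_pkl k ℓ).intervalIntegrable a b) fun u hu => ?_
  refine le_trans ?_ (pkl_lower k ℓ hk hℓ x u)
  have h2 : |x - u| ≤ 1 / 10 := by
    rw [abs_le]; constructor <;> linarith [hu.1, hu.2]
  have h3 : (1:ℝ) / 3 ≤ Real.exp (-(10 * |x - u|)) := by
    have h4 : Real.exp (-1) ≤ Real.exp (-(10 * |x - u|)) :=
      Real.exp_le_exp.2 (by linarith)
    have := Real.exp_neg_one_gt_d9
    linarith
  have := mul_le_mul_of_nonneg_right h3 (pkl_pos k ℓ hℓ x).le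
  linarith

lemma arith_aux (d Q P : ℝ) (hd : 0 ≤ d) (hP : 0 ≤ P) (hQ : min d (1 / 10) * (P / 3) ≤ Q) :
    0 ≤ 0.5 * d * (1 + 0.25 * d ^ 2) * Q - 0.00025 * d ^ 2 * P := by
  have h1 : 0 ≤ 0.5 * d * (1 + 0.25 * d ^ 2) := by positivity
  have h2 := mul_le_mul_of_nonneg_left hQ h1
  have h3 : 0.00025 * d ≤ 0.5 * (1 + 0.25 * d ^ 2) * (min d (1 / 10) / 3) := by
    rcases le_total d (1 / 10) with h | h
    · rw [min_eq_left h]; nlinarith [mul_nonneg hd (sq_nonneg d)]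
    · rw [min_eq_right h]; nlinarith [sq_nonneg (d - 2)]
  have h4 := mul_le_mul_of_nonneg_right h3 (mul_nonneg hd hP)
  nlinarith

/-- **Monotonicity of the flat approximations** (inequality part of Theorem 4.4):
for all positive integers `k, ℓ` and all reals `x, y`,
`0.5(x-y)(1+0.25(x-y)²)(q_{k,ℓ}(x) - q_{k,ℓ}(y)) - 0.00025(x-y)² p_{k,ℓ}(x) ≥ 0`. -/
theorem monotone_flat_approx (k ℓ : ℕ) (hk : 0 < k) (hℓ : 0 < ℓ) (x y : ℝ) :
    0 ≤ 0.5 * (x - y) * (1 + 0.25 * (x - y) ^ 2) * (qkl k ℓ x - qkl k ℓ y)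
        - 0.00025 * (x - y) ^ 2 * pkl k ℓ x := by
  have hP := (pkl_pos k ℓ hℓ x).le
  rcases le_total y x with h | h
  · have m1 := min_le_left (x - y) (1 / 10)
    have m2 := min_le_right (x - y) (1 / 10)
    have m0 : 0 ≤ min (x - y) (1 / 10) := le_min (by linarith) (by norm_num)
    refine arith_aux _ _ _ (by linarith) hP ?_
    have h1 := qkl_short k ℓ hk hℓ x (a := x - min (x - y) (1 / 10)) (b := x)
      (by linarith) (by linarith) (by linarith)
    have h2 := qkl_mono k ℓ hℓ (a := y) (b := x - min (x - y) (1 / 10)) (by linarith)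
    rw [sub_sub_cancel] at h1
    linarith
  · have m1 := min_le_left (y - x) (1 / 10)
    have m2 := min_le_right (y - x) (1 / 10)
    have m0 : 0 ≤ min (y - x) (1 / 10) := le_min (by linarith) (by norm_num)
    have h1 := qkl_short k ℓ hk hℓ x (a := x) (b := x + min (y - x) (1 / 10))
      (by linarith) (by linarith) (by linarith)
    have h2 := qkl_mono k ℓ hℓ (a := x + min (y - x) (1 / 10)) (b := y) (by linarith)
    rw [add_sub_cancel_left] at h1
    have := arith_aux (y - x) (qkl k ℓ y - qkl k ℓ x) _ (by linarith) hP (by linarith)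
    refine this.trans_eq ?_
    ring
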